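/- Let l_1,…,l_n and r_1,…,r_n be d-dimensional bit vectors and let ℓ ≥ 1, p ∈ {0,1}, q ≥ 0 be integers, and let G = G_{L,R,ℓ,p,q}. Then dist_G(u_1^L, u_1^R) ≥ 4ℓ − 2p + q. -/

import Mathlib

namespace GraphOV

/-- Two bit vectors (functions into `Fin 2`) are orthogonal if in every coordinate
at least one of them is `0`. -/
def Orth {d : ℕ} (a b : Fin d → Fin 2) : Prop := ∀ k, a k = 0 ∨ b k = 0

/-- A system of internally disjoint paths joining exterior vertices from `E`:
for each path name `i : ι` we record its two endpoints and its length. -/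
structure PathSys (E : Type) (ι : Type) where
  src : ι → E
  dst : ι → E
  len : ι → ℕ

namespace PathSys

variable {E ι : Type}

/-- Endpoints of zero-length paths get identified. -/
def idRel (S : PathSys E ι) (a b : E) : Prop :=
  ∃ i, S.len i = 0 ∧ S.src i = a ∧ S.dst i = b

/-- Vertices of the glued graph: exterior vertices (up to identification) together
with, for each path of length `m`, fresh interior vertices at positions `1,…,m-1`. -/
def Vert (S : PathSys E ι) : Type :=
  Quot S.idRel ⊕ Σ i : ι, {t : ℕ // 0 < t ∧ t < S.len i}

/-- The vertex corresponding to an exterior vertex. -/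
def ext (S : PathSys E ι) (a : E) : S.Vert := Sum.inl (Quot.mk _ a)

/-- The `t`-th vertex on the path named `i` (for `0 ≤ t ≤ S.len i`). -/
def pt (S : PathSys E ι) (i : ι) (t : ℕ) : S.Vert :=
  if h : 0 < t ∧ t < S.len i then Sum.inr ⟨i, t, h⟩
  else if t = 0 then S.ext (S.src i) else S.ext (S.dst i)

/-- The glued graph: consecutive vertices on each path are adjacent. -/
def graph (S : PathSys E ι) : SimpleGraph S.Vert :=
  SimpleGraph.fromRel fun a b =>
    ∃ i t, t + 1 ≤ S.len i ∧ a = S.pt i t ∧ b = S.pt i (t + 1)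

/-- The set of vertices lying on the path named `i`. -/
def onPath (S : PathSys E ι) (i : ι) : Set S.Vert :=
  {v | ∃ t ≤ S.len i, v = S.pt i t}

/-- A walk in the glued graph contains the path named `i` entirely if all vertices of
that path occur consecutively (in forward or backward order) on the walk. -/
def WalkContainsPath (S : PathSys E ι) {x y : S.Vert} (W : S.graph.Walk x y) (i : ι) : Prop :=
  ∃ a, a + S.len i ≤ W.length ∧
    ((∀ t ≤ S.len i, W.getVert (a + t) = S.pt i t) ∨
     (∀ t ≤ S.len i, W.getVert (a + t) = S.pt i (S.len i - t)))

end PathSys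

/-- The exterior vertices of the graph `G_{L,R,ℓ,p,q}`. -/
inductive Ext (n d : ℕ) : Type
  | uL : Fin n → Ext n d
  | uR : Fin n → Ext n d
  | vL : Fin n → Ext n d
  | vR : Fin n → Ext n d
  | wL : Fin d → Ext n d
  | wR : Fin d → Ext n d
  | xL : Ext n d
  | xR : Ext n d
  | yL : Ext n d
  | yR : Ext n d

/-- Names for the paths of the graph `G_{L,R,ℓ,p,q}`. -/
inductive Idx (n d : ℕ) (l r : Fin n → Fin d → Fin 2) : Type
  | uvL : Fin n → Idx n d l r
  | uvR : Fin n → Idx n d l r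
  | vxL : Fin n → Idx n d l r
  | vxR : Fin n → Idx n d l r
  | vwL : (i : Fin n) → (k : Fin d) → l i k = 1 → Idx n d l r
  | vwR : (j : Fin n) → (k : Fin d) → r j k = 1 → Idx n d l r
  | ywL : Fin d → Idx n d l r
  | ywR : Fin d → Idx n d l r
  | ww : Fin d → Idx n d l r
  | xyL : Idx n d l r
  | xyR : Idx n d l r
  | yy : Idx n d l r

/-- The path system defining the graph `G_{L,R,ℓ,p,q}`. -/
def sys (n d : ℕ) (l r : Fin n → Fin d → Fin 2) (ℓ p q : ℕ) :
    PathSys (Ext n d) (Idx n d l r) where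
  src := fun i => match i with
    | .uvL i => .uL i
    | .uvR i => .uR i
    | .vxL i => .vL i
    | .vxR i => .vR i
    | .vwL i _ _ => .vL i
    | .vwR j _ _ => .vR j
    | .ywL _ => .yL
    | .ywR _ => .yR
    | .ww k => .wL k
    | .xyL => .xL
    | .xyR => .xR
    | .yy => .yL
  dst := fun i => match i with
    | .uvL i => .vL i
    | .uvR i => .vR i
    | .vxL _ => .xL
    | .vxR _ => .xR
    | .vwL _ k _ => .wL k
    | .vwR _ k _ => .wR k
    | .ywL k => .wL k
    | .ywR k => .wR k
    | .ww k => .wR k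
    | .xyL => .yL
    | .xyR => .yR
    | .yy => .yR
  len := fun i => match i with
    | .uvL _ => ℓ - p
    | .uvR _ => ℓ - p
    | .vxL _ => ℓ
    | .vxR _ => ℓ
    | .vwL _ _ _ => ℓ
    | .vwR _ _ _ => ℓ
    | .ywL _ => ℓ
    | .ywR _ => ℓ
    | .ww _ => q
    | .xyL => ℓ - p
    | .xyR => ℓ - p
    | .yy => p + q

/-- The set `P_i^L`. -/
def PL (n d : ℕ) (l r : Fin n → Fin d → Fin 2) (ℓ p q : ℕ) (i : Fin n) :
    Set (sys n d l r ℓ p q).Vert :=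
  (sys n d l r ℓ p q).onPath (.uvL i) ∪
    ((sys n d l r ℓ p q).onPath (.vxL i) \ {(sys n d l r ℓ p q).ext .xL}) ∪
    ⋃ (k : Fin d) (h : l i k = 1),
      ((sys n d l r ℓ p q).onPath (.vwL i k h) \ {(sys n d l r ℓ p q).ext (.wL k)})

/-- The set `P_j^R`. -/
def PR (n d : ℕ) (l r : Fin n → Fin d → Fin 2) (ℓ p q : ℕ) (j : Fin n) :
    Set (sys n d l r ℓ p q).Vert :=
  (sys n d l r ℓ p q).onPath (.uvR j) ∪
    ((sys n d l r ℓ p q).onPath (.vxR j) \ {(sys n d l r ℓ p q).ext .xR}) ∪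
    ⋃ (k : Fin d) (h : r j k = 1),
      ((sys n d l r ℓ p q).onPath (.vwR j k h) \ {(sys n d l r ℓ p q).ext (.wR k)})

/-- The set `V^L`. -/
def VL (n d : ℕ) (l r : Fin n → Fin d → Fin 2) (ℓ p q : ℕ) :
    Set (sys n d l r ℓ p q).Vert := ⋃ i : Fin n, PL n d l r ℓ p q i

/-- The set `V^R`. -/
def VR (n d : ℕ) (l r : Fin n → Fin d → Fin 2) (ℓ p q : ℕ) :
    Set (sys n d l r ℓ p q).Vert := ⋃ j : Fin n, PR n d l r ℓ p q j

/-- The set `V^M` of all remaining vertices. -/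
def VM (n d : ℕ) (l r : Fin n → Fin d → Fin 2) (ℓ p q : ℕ) :
    Set (sys n d l r ℓ p q).Vert := (VL n d l r ℓ p q ∪ VR n d l r ℓ p q)ᶜ

/-! A function on the exterior vertices that changes by at most `len i` along each path `i` extends
to a function on the whole graph that changes by at most one along each edge, so its differences
bound distances from below. Placing the vertices on a line in the order `u^L`, `v^L`, the left `w`,
`x`, `y`, the right `w`, `x`, `y`, `v^R`, `u^R`, with successive gaps `ℓ - p`, `ℓ`, `q`, `ℓ`,
`ℓ - p`, gives such a function, and the gaps add up to `4ℓ - 2p + q`. -/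

theorem le_add_length_of_walk {V R : Type*} [AddMonoidWithOne R] [Preorder R] [AddRightMono R]
    {G : SimpleGraph V} {f : V → R} (hf : ∀ ⦃a b⦄, G.Adj a b → f b ≤ f a + 1) {a b : V}
    (W : G.Walk a b) : f b ≤ f a + W.length := by
  induction W with
  | nil => simp
  | @cons a b c hab W ih =>
    calc f c ≤ f b + W.length := ih
      _ ≤ f a + 1 + W.length := by gcongr; exact hf hab
      _ = f a + (W.cons hab).length := by
        rw [SimpleGraph.Walk.length_cons, add_comm W.length, Nat.cast_add, Nat.cast_one, add_assoc]

theorem le_add_dist_of_reachable {V R : Type*} [AddMonoidWithOne R] [Preorder R] [AddRightMono R]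
    {G : SimpleGraph V} {f : V → R} (hf : ∀ ⦃a b⦄, G.Adj a b → f b ≤ f a + 1) {a b : V}
    (hab : G.Reachable a b) : f b ≤ f a + G.dist a b := by
  obtain ⟨W, hW⟩ := hab.exists_walk_length_eq_dist
  exact hW ▸ le_add_length_of_walk hf W

namespace PathSys

variable {E ι : Type} (S : PathSys E ι)

theorem pt_zero (i : ι) : S.pt i 0 = S.ext (S.src i) := by
  simp [pt]

theorem pt_len (i : ι) : S.pt i (S.len i) = S.ext (S.dst i) := by
  by_cases h : S.len i = 0
  · rw [h, pt_zero]
    exact congrArg Sum.inl (Quot.sound ⟨i, h, rfl, rfl⟩)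
  · simp [pt, h]

theorem reachable_src_pt (i : ι) {t : ℕ} (ht : t ≤ S.len i) :
    S.graph.Reachable (S.ext (S.src i)) (S.pt i t) := by
  induction t with
  | zero => rw [pt_zero]
  | succ t ih =>
    refine (ih (by omega)).trans ?_
    by_cases h : S.pt i t = S.pt i (t + 1)
    · rw [h]
    · exact SimpleGraph.Adj.reachable
        ((SimpleGraph.fromRel_adj _ _ _).2 ⟨h, Or.inl ⟨i, t, ht, rfl, rfl⟩⟩)

theorem reachable_src_dst (i : ι) : S.graph.Reachable (S.ext (S.src i)) (S.ext (S.dst i)) :=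
  S.pt_len i ▸ S.reachable_src_pt i le_rfl

/-- A potential on a path system: an integer labelling of the exterior vertices that changes by at
most the length of a path between its endpoints. -/
def IsPotential (f : E → ℤ) : Prop :=
  ∀ i, |f (S.dst i) - f (S.src i)| ≤ S.len i

namespace IsPotential

variable {S} {f : E → ℤ}

theorem eq_of_idRel (hf : S.IsPotential f) {a b : E} (hab : S.idRel a b) : f a = f b := by
  obtain ⟨i, hi, rfl, rfl⟩ := hab
  have h : |f (S.dst i) - f (S.src i)| ≤ 0 := by simpa [hi] using hf i
  exact (sub_eq_zero.1 (abs_nonpos_iff.1 h)).symm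

/-- The extension of a potential to all vertices of the glued graph. On the interior of a path it
is the largest function that changes by at most one per edge and has the prescribed end values. -/
def extend (hf : S.IsPotential f) : S.Vert → ℤ
  | .inl a => Quot.lift f (fun _ _ => hf.eq_of_idRel) a
  | .inr ⟨i, t, _⟩ => min (f (S.src i) + t) (f (S.dst i) + (S.len i - t))

theorem extend_ext (hf : S.IsPotential f) (a : E) : hf.extend (S.ext a) = f a := rfl

theorem extend_pt (hf : S.IsPotential f) (i : ι) {t : ℕ} (ht : t ≤ S.len i) :
    hf.extend (S.pt i t) = min (f (S.src i) + t) (f (S.dst i) + (S.len i - t)) := by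
  obtain ⟨hdown, hup⟩ := abs_le.1 (hf i)
  rcases Nat.eq_zero_or_pos t with rfl | hpos
  · rw [pt_zero, extend_ext, min_eq_left (by omega), Nat.cast_zero, add_zero]
  rcases ht.eq_or_lt with rfl | hlt
  · rw [pt_len, extend_ext, min_eq_right (by omega), sub_self, add_zero]
  · have hpt : S.pt i t = Sum.inr ⟨i, t, hpos, hlt⟩ := dif_pos ⟨hpos, hlt⟩
    rw [hpt, extend]

theorem extend_le_add_one (hf : S.IsPotential f) ⦃a b : S.Vert⦄ (hab : S.graph.Adj a b) :
    hf.extend b ≤ hf.extend a + 1 := by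
  obtain ⟨-, ⟨i, t, ht, rfl, rfl⟩ | ⟨i, t, ht, rfl, rfl⟩⟩ := (SimpleGraph.fromRel_adj _ _ _).1 hab
  all_goals
    rw [hf.extend_pt i ht, hf.extend_pt i (Nat.le_of_succ_le ht)]
    omega

theorem le_add_dist (hf : S.IsPotential f) {a b : E}
    (hab : S.graph.Reachable (S.ext a) (S.ext b)) :
    f b ≤ f a + S.graph.dist (S.ext a) (S.ext b) :=
  le_add_dist_of_reachable hf.extend_le_add_one hab

end IsPotential

end PathSys

/-- The position of each exterior vertex of `G_{L,R,ℓ,p,q}` on the line, measured from the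
vertices `u_i^L`. It is integer-valued so that no subtraction truncates. -/
def position {n d : ℕ} (ℓ p q : ℕ) : Ext n d → ℤ
  | .uL _ => 0
  | .vL _ => ℓ - p
  | .wL _ | .xL | .yL => 2 * ℓ - p
  | .wR _ | .xR | .yR => 2 * ℓ - p + q
  | .vR _ => 3 * ℓ - p + q
  | .uR _ => 4 * ℓ - 2 * p + q

section

variable {n d ℓ p q : ℕ} (l r : Fin n → Fin d → Fin 2)

theorem isPotential_position (hpℓ : p ≤ ℓ) :
    (sys n d l r ℓ p q).IsPotential (position ℓ p q) := by
  intro path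
  rw [abs_le]
  cases path <;> simp only [sys, position] <;> omega

theorem reachable_uL_uR (i j : Fin n) :
    (sys n d l r ℓ p q).graph.Reachable
      ((sys n d l r ℓ p q).ext (.uL i)) ((sys n d l r ℓ p q).ext (.uR j)) := by
  have path := (sys n d l r ℓ p q).reachable_src_dst
  have left : (sys n d l r ℓ p q).graph.Reachable
      ((sys n d l r ℓ p q).ext (.uL i)) ((sys n d l r ℓ p q).ext .yL) :=
    (path (.uvL i)).trans <| (path (.vxL i)).trans (path .xyL)
  have right : (sys n d l r ℓ p q).graph.Reachable
      ((sys n d l r ℓ p q).ext (.uR j)) ((sys n d l r ℓ p q).ext .yR) :=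
    (path (.uvR j)).trans <| (path (.vxR j)).trans (path .xyR)
  exact left.trans <| (path .yy).trans right.symm

theorem dist_u1_to_u1_general (hpℓ : p ≤ ℓ) (i j : Fin n) :
    4 * ℓ - 2 * p + q ≤ (sys n d l r ℓ p q).graph.dist
      ((sys n d l r ℓ p q).ext (.uL i)) ((sys n d l r ℓ p q).ext (.uR j)) := by
  have h := (isPotential_position (q := q) l r hpℓ).le_add_dist (reachable_uL_uR l r i j)
  simp only [position] at h
  omega

end

theorem dist_u1_to_u1 (n d ℓ p q : ℕ) (hn : 1 ≤ n) (hd : 1 ≤ d) (hℓ : 1 ≤ ℓ)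
    (hp : p ≤ 1) (l r : Fin n → Fin d → Fin 2) :
    4 * ℓ - 2 * p + q ≤ (sys n d l r ℓ p q).graph.dist
      ((sys n d l r ℓ p q).ext (.uL ⟨0, hn⟩)) ((sys n d l r ℓ p q).ext (.uR ⟨0, hn⟩)) :=
  dist_u1_to_u1_general l r (hp.trans hℓ) _ _

end GraphOV
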